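/- For every real q ∈ (0, 1/2), the double series T(q) = ∑_{ν=1}^∞ ∑_{j=0}^∞ (a(q) q^{-j};q)_j/(q^{-j};q)_j · v(q)^ν q^{(j+1)ν}/(1-2q+q^{ν+2}) converges absolutely and PA(q) = D(q) - q² A(q) · ( (a(q);q)_∞ (v(q);q)_∞ / ((q;q)_∞ (a(q)v(q);q)_∞) ) · T(q). -/

import Mathlib

open Complex Filter Asymptotics Topology

noncomputable section

/-- finite q-Pochhammer symbol `(x;q)_n` -/
def qPF (x q : ℂ) (n : ℕ) : ℂ := ∏ i ∈ Finset.range n, (1 - x * q ^ i)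

/-- infinite q-Pochhammer symbol `(x;q)_∞` -/
def qPI (x q : ℂ) : ℂ := ∏' i : ℕ, (1 - x * q ^ i)

def uF (q : ℂ) : ℂ := q / (1 - q)
def vF (q : ℂ) : ℂ := (1 - q + q ^ 2) / (1 - q)
def aF (q : ℂ) : ℂ := q ^ 2 / (1 - q + q ^ 2)
def AF (q : ℂ) : ℂ := 2 * q * (1 - q) ^ 2 / (1 - 2 * q) ^ 2
def CF (q : ℂ) : ℂ := 2 * q * (3 - 10 * q + 9 * q ^ 2 - q ^ 3) / ((1 - q) * (1 - 2 * q) ^ 2)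
def DF (q : ℂ) : ℂ := CF q - (q ^ 2 / (1 - q) ^ 2) * AF q * qPI (vF q) q / qPI (aF q * vF q) q

/-- the `m`-th term (for `m ≥ 1`) of the explicit series for `PA(q)` -/
def PAterm (q : ℂ) (m : ℕ) : ℂ :=
  (-1) ^ m * q ^ (2 * m) / ((1 - 2 * q) ^ m * (1 - q - q ^ (m + 1))) *
    ∏ k ∈ Finset.Icc 1 (m - 1),
      ((1 - q - q ^ k + q ^ (k + 1) - q ^ (k + 2)) / (1 - q - q ^ (k + 1)))

/-- the explicit convergent series defining `PA(q)` for small `q` -/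
def PAseries (q : ℂ) : ℂ :=
  (-2 * q ^ 3 * (1 - q) ^ 2 / (1 - 2 * q) ^ 2) * (∑' m : ℕ, PAterm q (m + 1))
    + 2 * q * (3 - 10 * q + 9 * q ^ 2 - q ^ 3) / ((1 - 2 * q) ^ 2 * (1 - q))

/-- the `(ν,j)` term (for `ν ≥ 1`, `j ≥ 0`) of the double sum `T(q)` -/
def Tterm (q : ℂ) (ν j : ℕ) : ℂ :=
  (qPF (aF q * q ^ (-(j : ℤ))) q j / qPF (q ^ (-(j : ℤ))) q j) *
    (vF q ^ ν * q ^ ((j + 1) * ν) / (1 - 2 * q + q ^ (ν + 2)))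

/-!
By the `q`-binomial theorem the ratio `(v;q)_m / (av;q)_m` is, up to a factor independent of `m`,
the power series `∑ n, (a;q)_n / (q;q)_n * (v * q ^ m) ^ n`. The product in the `m`-th term of the
series for `PA` is such a ratio, so after inserting the power series the sum over `m` becomes
geometric, and what remains is the single series with terms
`(a;q)_n / (q;q)_n * (v * q) ^ n / (1 - 2 * q + q ^ (n + 2))`. These denominators have no zero in
the disc `‖q‖ < 1 / 2`, which gives the continuation of `PA` to the whole disc. Expanding the
coefficients `(a;q)_n / (q;q)_n` by the `q`-binomial theorem once more, now in powers of
`a * q ^ n`, turns the single series into the double series `T`; the coefficients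
`(a * q ^ (-j);q)_j / (q ^ (-j);q)_j` are those of the `q`-binomial series with the products
reversed.
-/

/-- The coefficient `(a;q)_n / (q;q)_n` of `z ^ n` in the `q`-binomial series. -/
def qBinomCoeff (a q : ℂ) (n : ℕ) : ℂ := qPF a q n / qPF q q n

/-- The `q`-binomial series `₁φ₀(a; q, z)`. -/
def qBinomSeries (a q z : ℂ) : ℂ := ∑' n, qBinomCoeff a q n * z ^ n

section QPochhammer

variable {a q x z : ℂ}

lemma qPF_zero (x q : ℂ) : qPF x q 0 = 1 := Finset.prod_range_zero _

lemma qPF_succ (x q : ℂ) (n : ℕ) : qPF x q (n + 1) = qPF x q n * (1 - x * q ^ n) :=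
  Finset.prod_range_succ _ _

lemma summable_norm_neg_mul_pow (x : ℂ) (hq : ‖q‖ < 1) : Summable fun i : ℕ => ‖-(x * q ^ i)‖ := by
  simpa only [norm_neg, norm_mul, norm_pow] using
    (summable_geometric_of_lt_one (norm_nonneg q) hq).mul_left ‖x‖

lemma multipliable_one_sub_mul_pow (x : ℂ) (hq : ‖q‖ < 1) :
    Multipliable fun i : ℕ => 1 - x * q ^ i := by
  simpa only [sub_eq_add_neg] using
    multipliable_one_add_of_summable (summable_norm_neg_mul_pow x hq)

lemma tendsto_qPF (x : ℂ) (hq : ‖q‖ < 1) : Tendsto (qPF x q) atTop (𝓝 (qPI x q)) :=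
  (multipliable_one_sub_mul_pow x hq).hasProd.tendsto_prod_nat

lemma qPF_mul_qPI (x : ℂ) (hq : ‖q‖ < 1) (n : ℕ) :
    qPF x q n * qPI (x * q ^ n) q = qPI x q := by
  have shift : (fun i : ℕ => 1 - x * q ^ n * q ^ i) = fun i => 1 - x * q ^ (i + n) := by
    funext i
    ring
  have tail := multipliable_one_sub_mul_pow (x * q ^ n) hq
  rw [shift] at tail
  rw [qPF, qPI, shift]
  exact Multipliable.prod_mul_tprod_nat_mul' (f := fun i => 1 - x * q ^ i) tail

lemma norm_mul_pow_le (x : ℂ) (hq : ‖q‖ ≤ 1) (n : ℕ) : ‖x * q ^ n‖ ≤ ‖x‖ := by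
  rw [norm_mul, norm_pow]
  exact mul_le_of_le_one_right (norm_nonneg x) (pow_le_one₀ (norm_nonneg q) hq)

lemma one_sub_ne_zero_of_norm_lt_one (hz : ‖z‖ < 1) : 1 - z ≠ 0 :=
  sub_ne_zero.2 fun h => by simp [← h] at hz

lemma one_sub_mul_pow_ne_zero (hq : ‖q‖ ≤ 1) (hx : ‖x‖ < 1) (n : ℕ) : 1 - x * q ^ n ≠ 0 :=
  one_sub_ne_zero_of_norm_lt_one ((norm_mul_pow_le x hq n).trans_lt hx)

lemma qPI_ne_zero (hq : ‖q‖ < 1) (hx : ‖x‖ < 1) : qPI x q ≠ 0 := by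
  have hne : ∀ i : ℕ, 1 + -(x * q ^ i) ≠ 0 := fun i => by
    simpa only [← sub_eq_add_neg] using one_sub_mul_pow_ne_zero hq.le hx i
  simpa only [qPI, sub_eq_add_neg] using
    tprod_one_add_ne_zero_of_summable hne (summable_norm_neg_mul_pow x hq)

lemma qPF_ne_zero (hq : ‖q‖ ≤ 1) (hx : ‖x‖ < 1) (n : ℕ) : qPF x q n ≠ 0 :=
  Finset.prod_ne_zero_iff.2 fun i _ => one_sub_mul_pow_ne_zero hq hx i

lemma norm_qPF_le {α r : ℝ} (hx : ‖x‖ ≤ α) (hq : ‖q‖ ≤ r) (n : ℕ) :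
    ‖qPF x q n‖ ≤ ‖qPF (-α : ℝ) r n‖ := by
  have hα : 0 ≤ α := (norm_nonneg x).trans hx
  have hr : 0 ≤ r := (norm_nonneg q).trans hq
  rw [qPF, qPF, norm_prod, norm_prod]
  refine Finset.prod_le_prod (fun _ _ => norm_nonneg _) fun i _ => ?_
  calc ‖1 - x * q ^ i‖ ≤ 1 + ‖x‖ * ‖q‖ ^ i := by
        simpa only [norm_one, norm_mul, norm_pow] using norm_sub_le 1 (x * q ^ i)
    _ ≤ 1 + α * r ^ i := by gcongr
    _ = ‖((1 + α * r ^ i : ℝ) : ℂ)‖ := by rw [norm_real, Real.norm_of_nonneg (by positivity)]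
    _ = ‖1 - ((-α : ℝ) : ℂ) * (r : ℂ) ^ i‖ := by push_cast; congr 1; ring

lemma norm_qPF_ge {α r : ℝ} (hx : ‖x‖ ≤ α) (hα : α ≤ 1) (hq : ‖q‖ ≤ r) (hr : r ≤ 1) (n : ℕ) :
    ‖qPF α r n‖ ≤ ‖qPF x q n‖ := by
  have hα₀ : 0 ≤ α := (norm_nonneg x).trans hx
  have hr₀ : 0 ≤ r := (norm_nonneg q).trans hq
  rw [qPF, qPF, norm_prod, norm_prod]
  refine Finset.prod_le_prod (fun _ _ => norm_nonneg _) fun i _ => ?_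
  have hnonneg : 0 ≤ 1 - α * r ^ i :=
    sub_nonneg.2 (mul_le_one₀ hα (by positivity) (pow_le_one₀ hr₀ hr))
  calc ‖1 - (α : ℂ) * (r : ℂ) ^ i‖ = ‖((1 - α * r ^ i : ℝ) : ℂ)‖ := by push_cast; rfl
    _ = 1 - α * r ^ i := by rw [norm_real, Real.norm_of_nonneg hnonneg]
    _ ≤ 1 - ‖x‖ * ‖q‖ ^ i := by gcongr
    _ ≤ ‖1 - x * q ^ i‖ := by
        simpa only [norm_one, norm_mul, norm_pow] using norm_sub_norm_le 1 (x * q ^ i)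

end QPochhammer

section QBinomial

variable {a q x z : ℂ}

lemma qBinomCoeff_zero (a q : ℂ) : qBinomCoeff a q 0 = 1 := by
  rw [qBinomCoeff, qPF_zero, qPF_zero, div_one]

lemma qBinomCoeff_succ_mul (a : ℂ) (hq : ‖q‖ < 1) (n : ℕ) :
    qBinomCoeff a q (n + 1) * (1 - q ^ (n + 1)) = qBinomCoeff a q n * (1 - a * q ^ n) := by
  have hn : 1 - q ^ (n + 1) ≠ 0 := by
    simpa only [pow_succ'] using one_sub_mul_pow_ne_zero hq.le hq n
  rw [qBinomCoeff, qBinomCoeff, qPF_succ, qPF_succ, ← pow_succ', mul_div_mul_comm, mul_assoc,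
    div_mul_cancel₀ _ hn]

lemma exists_uniform_norm_qBinomCoeff_le (α : ℝ) {r : ℝ} (hr₀ : 0 ≤ r) (hr : r < 1) :
    ∃ C, ∀ a q : ℂ, ‖a‖ ≤ α → ‖q‖ ≤ r → ∀ n, ‖qBinomCoeff a q n‖ ≤ C := by
  have hr' : ‖(r : ℂ)‖ < 1 := by rwa [norm_real, Real.norm_of_nonneg hr₀]
  have hlim : Tendsto (qBinomCoeff (-α : ℝ) r) atTop (𝓝 (qPI (-α : ℝ) r / qPI r r)) :=
    (tendsto_qPF _ hr').div (tendsto_qPF _ hr') (qPI_ne_zero hr' hr')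
  obtain ⟨C, hC⟩ := (Metric.isBounded_range_of_tendsto _ hlim).exists_norm_le
  refine ⟨C, fun a q ha hq n => le_trans ?_ (hC _ ⟨n, rfl⟩)⟩
  rw [qBinomCoeff, qBinomCoeff, norm_div, norm_div]
  exact div_le_div₀ (norm_nonneg _) (norm_qPF_le ha hq n)
    (norm_pos_iff.2 (qPF_ne_zero hr'.le hr' n)) (norm_qPF_ge hq hr.le hq hr.le n)

lemma exists_norm_qBinomCoeff_le (a : ℂ) (hq : ‖q‖ < 1) :
    ∃ C, ∀ n, ‖qBinomCoeff a q n‖ ≤ C :=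
  (exists_uniform_norm_qBinomCoeff_le ‖a‖ (norm_nonneg q) hq).imp fun _ hC => hC a q le_rfl le_rfl

lemma summable_mul_pow_of_norm_le {c : ℕ → ℂ} {C : ℝ} (hc : ∀ n, ‖c n‖ ≤ C) (hz : ‖z‖ < 1) :
    Summable fun n => c n * z ^ n := by
  refine .of_norm_bounded ((summable_geometric_of_lt_one (norm_nonneg z) hz).mul_left C) fun n => ?_
  rw [norm_mul, norm_pow]
  gcongr
  exact hc n

lemma qBinomSeries_functional_equation (a : ℂ) (hq : ‖q‖ < 1) (hz : ‖z‖ < 1) :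
    (1 - z) * qBinomSeries a q z = (1 - a * z) * qBinomSeries a q (z * q) := by
  obtain ⟨C, hC⟩ := exists_norm_qBinomCoeff_le a hq
  have hzq : ‖z * q‖ < 1 := by simpa using (norm_mul_pow_le z hq.le 1).trans_lt hz
  have hs := summable_mul_pow_of_norm_le hC hz
  have hsq := summable_mul_pow_of_norm_le hC hzq
  have coeff_eq : ∀ n,
      qBinomCoeff a q (n + 1) * z ^ (n + 1) - z * (qBinomCoeff a q n * z ^ n) =
        qBinomCoeff a q (n + 1) * (z * q) ^ (n + 1) -
          a * z * (qBinomCoeff a q n * (z * q) ^ n) := fun n => by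
    rw [mul_pow, mul_pow]
    linear_combination z ^ (n + 1) * qBinomCoeff_succ_mul a hq n
  have tails : ∑' n, _ = ∑' n, _ := tsum_congr coeff_eq
  rw [((summable_nat_add_iff 1).2 hs).tsum_sub (hs.mul_left z),
    ((summable_nat_add_iff 1).2 hsq).tsum_sub (hsq.mul_left (a * z)), tsum_mul_left,
    tsum_mul_left] at tails
  have head := hs.tsum_eq_zero_add
  have headq := hsq.tsum_eq_zero_add
  simp only [pow_zero] at head headq
  rw [qBinomSeries, qBinomSeries]
  linear_combination tails + head - headq

lemma qPF_mul_qBinomSeries (a : ℂ) (hq : ‖q‖ < 1) (hz : ‖z‖ < 1) (N : ℕ) :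
    qPF z q N * qBinomSeries a q z = qPF (a * z) q N * qBinomSeries a q (z * q ^ N) := by
  induction N with
  | zero => simp only [qPF_zero, pow_zero, mul_one]
  | succ N ih =>
    have step := qBinomSeries_functional_equation a hq ((norm_mul_pow_le z hq.le N).trans_lt hz)
    rw [qPF_succ, qPF_succ, pow_succ, ← mul_assoc z]
    linear_combination (1 - z * q ^ N) * ih + qPF (a * z) q N * step

lemma tendsto_qBinomSeries_mul_pow (a : ℂ) (hq : ‖q‖ < 1) (hz : ‖z‖ < 1) :
    Tendsto (fun N : ℕ => qBinomSeries a q (z * q ^ N)) atTop (𝓝 1) := by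
  obtain ⟨C, hC⟩ := exists_norm_qBinomCoeff_le a hq
  have hC₀ : 0 ≤ C := (norm_nonneg _).trans (hC 0)
  have value_at_zero : ∑' n, qBinomCoeff a q n * (0 : ℂ) ^ n = 1 := by
    rw [tsum_eq_single 0 fun n hn => by rw [zero_pow hn, mul_zero], pow_zero, mul_one,
      qBinomCoeff_zero]
  rw [← value_at_zero]
  refine tendsto_tsum_of_dominated_convergence
    ((summable_geometric_of_lt_one (norm_nonneg z) hz).mul_left C) (fun n => ?_)
    (.of_forall fun N n => ?_)
  · have hlim := (tendsto_pow_atTop_nhds_zero_of_norm_lt_one hq).const_mul z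
    rw [mul_zero] at hlim
    exact (hlim.pow n).const_mul _
  · rw [norm_mul, norm_pow]
    gcongr
    exacts [hC n, norm_mul_pow_le z hq.le N]

theorem qBinomSeries_eq_qPI_div (a : ℂ) (hq : ‖q‖ < 1) (hz : ‖z‖ < 1) :
    qBinomSeries a q z = qPI (a * z) q / qPI z q := by
  rw [eq_div_iff (qPI_ne_zero hq hz), mul_comm]
  have hleft := (tendsto_qPF z hq).mul_const (qBinomSeries a q z)
  have hright := (tendsto_qPF (a * z) hq).mul (tendsto_qBinomSeries_mul_pow a hq hz)
  rw [mul_one] at hright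
  exact tendsto_nhds_unique (hleft.congr (qPF_mul_qBinomSeries a hq hz)) hright

lemma qPF_div_qPF_eq (hq : ‖q‖ < 1) {n : ℕ} (hx : ‖x * q ^ n‖ < 1) (hax : qPI (a * x) q ≠ 0) :
    qPF x q n / qPF (a * x) q n =
      qPI x q / qPI (a * x) q * qBinomSeries a q (x * q ^ n) := by
  have hx' := qPI_ne_zero hq hx
  rw [qBinomSeries_eq_qPI_div a hq hx, ← mul_assoc a]
  rw [← qPF_mul_qPI (a * x) hq n] at hax ⊢
  rw [← qPF_mul_qPI x hq n]
  have hF := left_ne_zero_of_mul hax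
  have hI := right_ne_zero_of_mul hax
  field_simp

lemma qPF_mul_zpow_neg (hx : x ≠ 0) (hq : q ≠ 0) (n : ℕ) :
    qPF (x * q ^ (-(n : ℤ))) q n =
      x ^ n * (∏ i ∈ Finset.range n, -(q ^ (i + 1))⁻¹) * qPF (q / x) q n := by
  have reversed : ∀ i ∈ Finset.range n, 1 - x * q ^ (-(n : ℤ)) * q ^ (n - 1 - i) =
      x * -(q ^ (i + 1))⁻¹ * (1 - q / x * q ^ i) := fun i hi => by
    have hn : q ^ n = q ^ (n - 1 - i) * q ^ (i + 1) := by
      rw [← pow_add]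
      congr 1
      have := Finset.mem_range.1 hi
      omega
    rw [zpow_neg, zpow_natCast, hn]
    field_simp
    ring
  rw [qPF, ← Finset.prod_range_reflect, Finset.prod_congr rfl reversed, Finset.prod_mul_distrib,
    Finset.prod_mul_distrib, Finset.prod_const, Finset.card_range, qPF]

lemma qPF_zpow_neg_div (ha : a ≠ 0) (hq : q ≠ 0) (n : ℕ) :
    qPF (a * q ^ (-(n : ℤ))) q n / qPF (q ^ (-(n : ℤ))) q n = qBinomCoeff (q / a) q n * a ^ n := by
  have hprod : ∏ i ∈ Finset.range n, -(q ^ (i + 1))⁻¹ ≠ 0 :=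
    Finset.prod_ne_zero_iff.2 fun i _ => neg_ne_zero.2 (inv_ne_zero (pow_ne_zero _ hq))
  have hden := qPF_mul_zpow_neg one_ne_zero hq n
  rw [one_mul, one_pow, one_mul, div_one] at hden
  rw [hden, qPF_mul_zpow_neg ha hq, mul_assoc, mul_div_assoc, mul_div_mul_left _ _ hprod, mul_comm,
    qBinomCoeff]

end QBinomial

section Interchange

lemma summable_mul_pow_mul_pow {c : ℕ → ℂ} {C : ℝ} (hc : ∀ n, ‖c n‖ ≤ C) {x q w : ℂ}
    (hx : ‖x‖ < 1) (hq : ‖q‖ ≤ 1) (hw : ‖w‖ < 1) :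
    Summable (Function.uncurry fun m n : ℕ => x ^ m * (c n * (w * q ^ m) ^ n)) := by
  have hC : 0 ≤ C := (norm_nonneg _).trans (hc 0)
  have majorant := ((summable_geometric_of_lt_one (norm_nonneg x) hx).mul_of_nonneg
    (summable_geometric_of_lt_one (norm_nonneg w) hw)
    (fun _ => by positivity) (fun _ => by positivity)).mul_left C
  refine .of_norm_bounded majorant fun ⟨m, n⟩ => ?_
  calc ‖x ^ m * (c n * (w * q ^ m) ^ n)‖ = ‖x‖ ^ m * (‖c n‖ * ‖w * q ^ m‖ ^ n) := by
        rw [norm_mul, norm_mul, norm_pow, norm_pow]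
    _ ≤ ‖x‖ ^ m * (C * ‖w‖ ^ n) := by
        gcongr
        exacts [hc n, norm_mul_pow_le w hq m]
    _ = C * (‖x‖ ^ m * ‖w‖ ^ n) := by ring

lemma tsum_pow_mul_tsum_mul_pow {c : ℕ → ℂ} {C : ℝ} (hc : ∀ n, ‖c n‖ ≤ C) {x q w : ℂ}
    (hx : ‖x‖ < 1) (hq : ‖q‖ ≤ 1) (hw : ‖w‖ < 1) :
    ∑' m, x ^ m * ∑' n, c n * (w * q ^ m) ^ n = ∑' n, c n * (w ^ n / (1 - x * q ^ n)) := by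
  simp only [← tsum_mul_left]
  rw [← (summable_mul_pow_mul_pow hc hx hq hw).tsum_comm]
  refine tsum_congr fun n => ?_
  have geometric : ∀ m, x ^ m * (c n * (w * q ^ m) ^ n) = c n * w ^ n * (x * q ^ n) ^ m :=
    fun m => by ring
  rw [tsum_congr geometric, tsum_mul_left,
    tsum_geometric_of_norm_lt_one ((norm_mul_pow_le x hq n).trans_lt hx), mul_assoc, div_eq_mul_inv]

end Interchange

section Holomorphy

lemma differentiableOn_qPF {x p : ℂ → ℂ} {U : Set ℂ} (hx : DifferentiableOn ℂ x U)
    (hp : DifferentiableOn ℂ p U) (n : ℕ) : DifferentiableOn ℂ (fun z => qPF (x z) (p z) n) U :=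
  DifferentiableOn.fun_finsetProd fun i _ => (differentiableOn_const 1).sub (hx.mul (hp.pow i))

lemma differentiableOn_qPI_of_norm_le {x p : ℂ → ℂ} {U : Set ℂ} (hU : IsOpen U)
    (hx : DifferentiableOn ℂ x U) (hp : DifferentiableOn ℂ p U) {M r : ℝ} (hr : r < 1)
    (hxM : ∀ z ∈ U, ‖x z‖ ≤ M) (hpr : ∀ z ∈ U, ‖p z‖ ≤ r) :
    DifferentiableOn ℂ (fun z => qPI (x z) (p z)) U := by
  rcases U.eq_empty_or_nonempty with rfl | ⟨z₀, hz₀⟩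
  · exact differentiableOn_empty
  have hr₀ : 0 ≤ r := (norm_nonneg _).trans (hpr z₀ hz₀)
  have hfactor : ∀ i : ℕ, DifferentiableOn ℂ (fun z => -(x z * p z ^ i)) U := fun i =>
    (hx.mul (hp.pow i)).neg
  have hbound : ∀ i : ℕ, ∀ z ∈ U, ‖-(x z * p z ^ i)‖ ≤ M * r ^ i := fun i z hz => by
    have hM : 0 ≤ M := (norm_nonneg _).trans (hxM z hz)
    rw [norm_neg, norm_mul, norm_pow]
    gcongr
    exacts [hxM z hz, hpr z hz]
  have hconv := (Summable.hasProdLocallyUniformlyOn_nat_one_add hU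
    ((summable_geometric_of_lt_one hr₀ hr).mul_left M) (.of_forall hbound)
    fun i => (hfactor i).continuousOn).tendstoLocallyUniformlyOn_finsetRange
  refine (hconv.differentiableOn (.of_forall fun N => DifferentiableOn.fun_finsetProd fun i _ =>
    (differentiableOn_const 1).add (hfactor i)) hU).congr fun z _ => ?_
  simp only [qPI, sub_eq_add_neg]

lemma differentiableOn_qPI {x p : ℂ → ℂ} {U : Set ℂ} (hU : IsOpen U)
    (hx : DifferentiableOn ℂ x U) (hp : DifferentiableOn ℂ p U) (hp₁ : ∀ z ∈ U, ‖p z‖ < 1) :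
    DifferentiableOn ℂ (fun z => qPI (x z) (p z)) U := by
  refine fun z hz => DifferentiableAt.differentiableWithinAt ?_
  obtain ⟨r, hzr, hr⟩ := exists_between (hp₁ z hz)
  let V : Set ℂ := (U ∩ (fun w => ‖x w‖) ⁻¹' Set.Iio (‖x z‖ + 1)) ∩
    (U ∩ (fun w => ‖p w‖) ⁻¹' Set.Iio r)
  have hV : IsOpen V := (hx.continuousOn.norm.isOpen_inter_preimage hU isOpen_Iio).inter
    (hp.continuousOn.norm.isOpen_inter_preimage hU isOpen_Iio)
  have hVU : V ⊆ U := fun w hw => hw.1.1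
  have hzV : z ∈ V := ⟨⟨hz, lt_add_one ‖x z‖⟩, hz, hzr⟩
  exact (differentiableOn_qPI_of_norm_le hV (hx.mono hVU) (hp.mono hVU) hr
    (fun w hw => le_of_lt hw.1.2) fun w hw => le_of_lt hw.2.2).differentiableAt (hV.mem_nhds hzV)

end Holomorphy

section Denominators

variable {q : ℂ}

lemma norm_pow_sub_one_le {w : ℂ} (hw : ‖w‖ ≤ 1) (n : ℕ) : ‖w ^ n - 1‖ ≤ n * ‖w - 1‖ := by
  rw [← geom_sum_mul, norm_mul]
  gcongr
  have hterm : ∀ i ∈ Finset.range n, ‖w ^ i‖ ≤ 1 := fun i _ => by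
    rw [norm_pow]
    exact pow_le_one₀ (norm_nonneg w) hw
  simpa using norm_sum_le_of_le _ hterm

lemma two_mul_le_two_pow (n : ℕ) : 2 * n ≤ 2 ^ n := by
  cases n with
  | zero => simp
  | succ m =>
    have := Nat.lt_two_pow_self (n := m)
    rw [pow_succ']
    omega

-- If `2 * q` is so close to `1` that `q ^ n` could cancel `1 - 2 * q`, then `(2 * q) ^ n` is close
-- enough to `1` for `q ^ n` to have nonnegative real part.
lemma norm_one_sub_two_mul_add_pow_ge (hq : ‖q‖ ≤ 1 / 2) (n : ℕ) :
    (1 - 2 * ‖q‖) / 2 ≤ ‖1 - 2 * q + q ^ n‖ := by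
  have hw : ‖2 * q‖ = 2 * ‖q‖ := by rw [norm_mul, norm_ofNat]
  have hpow := norm_pow_sub_one_le (w := 2 * q) (by linarith) n
  by_cases hn : n * ‖2 * q - 1‖ ≤ 1
  · have hre : 0 ≤ (q ^ n).re := by
      have hre_two_mul : 0 ≤ ((2 * q) ^ n).re := by
        have := (abs_le.1 ((abs_re_le_norm _).trans (hpow.trans hn))).1
        rw [sub_re, one_re] at this
        linarith
      have hscale : (2 * q) ^ n = ((2 ^ n : ℝ) : ℂ) * q ^ n := by push_cast; ring
      rw [hscale, re_ofReal_mul] at hre_two_mul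
      exact nonneg_of_mul_nonneg_right hre_two_mul (by positivity)
    calc (1 - 2 * ‖q‖) / 2 ≤ 1 - 2 * q.re + (q ^ n).re := by linarith [re_le_norm q]
      _ = (1 - 2 * q + q ^ n).re := by simp
      _ ≤ ‖1 - 2 * q + q ^ n‖ := re_le_norm _
  · have hsmall : ‖q ^ n‖ ≤ ‖1 - 2 * q‖ / 2 := by
      have hn_le : (n : ℝ) * (1 / 2) ^ n ≤ 1 / 2 := by
        have : (2 * n : ℝ) ≤ 2 ^ n := mod_cast two_mul_le_two_pow n
        rw [one_div_pow, mul_one_div, div_le_iff₀ (by positivity)]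
        linarith
      calc ‖q ^ n‖ ≤ (1 / 2) ^ n := by rw [norm_pow]; gcongr
        _ ≤ (1 / 2) ^ n * (n * ‖2 * q - 1‖) :=
          le_mul_of_one_le_right (by positivity) (not_le.1 hn).le
        _ = n * (1 / 2) ^ n * ‖1 - 2 * q‖ := by rw [norm_sub_rev]; ring
        _ ≤ ‖1 - 2 * q‖ / 2 := by nlinarith [norm_nonneg (1 - 2 * q)]
    have h₁ := norm_sub_norm_le 1 (2 * q)
    have h₂ := norm_sub_norm_le (1 - 2 * q) (-q ^ n)
    rw [norm_one] at h₁
    rw [norm_neg, sub_neg_eq_add] at h₂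
    linarith

lemma one_sub_two_mul_add_pow_ne_zero (hq : ‖q‖ < 1 / 2) (n : ℕ) : 1 - 2 * q + q ^ n ≠ 0 :=
  norm_pos_iff.1 <| by linarith [norm_one_sub_two_mul_add_pow_ge hq.le n]

lemma one_sub_two_mul_ne_zero (hq : ‖q‖ < 1 / 2) : 1 - 2 * q ≠ 0 :=
  one_sub_ne_zero_of_norm_lt_one <| by rw [norm_mul, norm_ofNat]; linarith

lemma half_lt_norm_one_sub (hq : ‖q‖ < 1 / 2) : 1 / 2 < ‖1 - q‖ := by
  have := norm_sub_norm_le 1 q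
  rw [norm_one] at this
  linarith

lemma one_sub_ne_zero_of_norm_lt_half (hq : ‖q‖ < 1 / 2) : 1 - q ≠ 0 :=
  one_sub_ne_zero_of_norm_lt_one (by linarith)

lemma norm_sq_le_quarter (hq : ‖q‖ < 1 / 2) : ‖q ^ 2‖ ≤ 1 / 4 := by
  rw [norm_pow]
  nlinarith [norm_nonneg q]

lemma quarter_lt_norm_one_sub_add_sq (hq : ‖q‖ < 1 / 2) : 1 / 4 < ‖1 - q + q ^ 2‖ := by
  have := norm_sub_norm_le (1 - q) (-q ^ 2)
  rw [norm_neg, sub_neg_eq_add] at this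
  linarith [half_lt_norm_one_sub hq, norm_sq_le_quarter hq]

lemma one_sub_add_sq_ne_zero (hq : ‖q‖ < 1 / 2) : 1 - q + q ^ 2 ≠ 0 :=
  norm_pos_iff.1 <| by linarith [quarter_lt_norm_one_sub_add_sq hq]

end Denominators

section Parameters

variable {q : ℂ}

lemma aF_mul_vF (hq : ‖q‖ < 1 / 2) : aF q * vF q = q ^ 2 / (1 - q) := by
  have := one_sub_add_sq_ne_zero hq
  rw [aF, vF]
  field_simp

lemma vF_eq_one_add (hq : ‖q‖ < 1 / 2) : vF q = 1 + q ^ 2 / (1 - q) := by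
  have := one_sub_ne_zero_of_norm_lt_half hq
  rw [vF]
  field_simp

lemma norm_aF_mul_vF_le (hq : ‖q‖ < 1 / 2) : ‖aF q * vF q‖ ≤ 1 / 2 := by
  have := half_lt_norm_one_sub hq
  rw [aF_mul_vF hq, norm_div, div_le_iff₀ (by linarith)]
  linarith [norm_sq_le_quarter hq]

lemma norm_aF_le_one (hq : ‖q‖ < 1 / 2) : ‖aF q‖ ≤ 1 := by
  have := quarter_lt_norm_one_sub_add_sq hq
  rw [aF, norm_div, div_le_iff₀ (by linarith)]
  linarith [norm_sq_le_quarter hq]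

lemma aF_ne_zero (hq₀ : q ≠ 0) (hq : ‖q‖ < 1 / 2) : aF q ≠ 0 :=
  div_ne_zero (pow_ne_zero 2 hq₀) (one_sub_add_sq_ne_zero hq)

lemma norm_vF_mul_le (hq : ‖q‖ < 1 / 2) : ‖vF q * q‖ ≤ 3 / 4 := by
  have hv : ‖vF q‖ ≤ 3 / 2 := by
    have hadd := norm_add_le 1 (aF q * vF q)
    rw [aF_mul_vF hq, ← vF_eq_one_add hq, norm_one, ← aF_mul_vF hq] at hadd
    linarith [norm_aF_mul_vF_le hq]
  rw [norm_mul]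
  nlinarith [norm_nonneg q, norm_nonneg (vF q)]

lemma qPI_aF_mul_vF_ne_zero (hq : ‖q‖ < 1 / 2) : qPI (aF q * vF q) q ≠ 0 :=
  qPI_ne_zero (by linarith) (by linarith [norm_aF_mul_vF_le hq])

end Parameters

/-- The `n`-th term of the single series that remains of the series for `PA` once the geometric
series over `m` has been summed. -/
def PAsingleTerm (q : ℂ) (n : ℕ) : ℂ :=
  qBinomCoeff (aF q) q n * ((vF q * q) ^ n / (1 - 2 * q + q ^ (n + 2)))

/-- The analytic continuation of the generating function `PA` to the disc `‖q‖ < 1 / 2`. -/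
def PAcont (q : ℂ) : ℂ :=
  CF q - q ^ 2 * AF q * (qPI (vF q) q / qPI (aF q * vF q) q) * ∑' n, PAsingleTerm q n

section Continuation

lemma exists_norm_PAsingleTerm_le :
    ∃ C, ∀ q : ℂ, ‖q‖ < 1 / 2 → ∀ n,
      ‖PAsingleTerm q n‖ ≤ C * ((3 / 4) ^ n / ((1 - 2 * ‖q‖) / 2)) := by
  obtain ⟨C, hC⟩ := exists_uniform_norm_qBinomCoeff_le 1 one_half_pos.le one_half_lt_one
  refine ⟨C, fun q hq n => ?_⟩
  have hcoeff := hC (aF q) q (norm_aF_le_one hq) hq.le n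
  have hpos : 0 < (1 - 2 * ‖q‖) / 2 := by linarith
  rw [PAsingleTerm, norm_mul, norm_div, norm_pow]
  gcongr
  exacts [(norm_nonneg _).trans hcoeff, norm_vF_mul_le hq,
    norm_one_sub_two_mul_add_pow_ge hq.le _]

lemma summable_three_quarters_pow_div (C d : ℝ) :
    Summable fun n : ℕ => C * ((3 / 4 : ℝ) ^ n / d) :=
  ((summable_geometric_of_lt_one (by norm_num) (by norm_num)).div_const d).mul_left C

lemma summable_PAsingleTerm {q : ℂ} (hq : ‖q‖ < 1 / 2) : Summable (PAsingleTerm q) :=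
  let ⟨C, hC⟩ := exists_norm_PAsingleTerm_le
  .of_norm_bounded (summable_three_quarters_pow_div C _) (hC q hq)

lemma differentiableOn_vF : DifferentiableOn ℂ vF (Metric.ball 0 (1 / 2)) :=
  DifferentiableOn.fun_div (by fun_prop) (by fun_prop)
    fun _ hz => one_sub_ne_zero_of_norm_lt_half (mem_ball_zero_iff.1 hz)

lemma differentiableOn_aF : DifferentiableOn ℂ aF (Metric.ball 0 (1 / 2)) :=
  DifferentiableOn.fun_div (by fun_prop) (by fun_prop)
    fun _ hz => one_sub_add_sq_ne_zero (mem_ball_zero_iff.1 hz)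

lemma differentiableOn_AF : DifferentiableOn ℂ AF (Metric.ball 0 (1 / 2)) :=
  DifferentiableOn.fun_div (by fun_prop) (by fun_prop)
    fun _ hz => pow_ne_zero 2 (one_sub_two_mul_ne_zero (mem_ball_zero_iff.1 hz))

lemma differentiableOn_CF : DifferentiableOn ℂ CF (Metric.ball 0 (1 / 2)) :=
  DifferentiableOn.fun_div (by fun_prop) (by fun_prop) fun z hz =>
    have hz := mem_ball_zero_iff.1 hz
    mul_ne_zero (one_sub_ne_zero_of_norm_lt_half hz) (pow_ne_zero 2 (one_sub_two_mul_ne_zero hz))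

lemma differentiableOn_PAsingleTerm (n : ℕ) :
    DifferentiableOn ℂ (fun q => PAsingleTerm q n) (Metric.ball 0 (1 / 2)) := by
  have hcoeff : DifferentiableOn ℂ (fun q => qBinomCoeff (aF q) q n) (Metric.ball 0 (1 / 2)) :=
    (differentiableOn_qPF differentiableOn_aF differentiableOn_id n).fun_div
      (differentiableOn_qPF differentiableOn_id differentiableOn_id n) fun z hz => by
        have hz := mem_ball_zero_iff.1 hz
        have hlt : ‖z‖ < 1 := by linarith
        exact qPF_ne_zero hlt.le hlt n
  exact hcoeff.mul <| ((differentiableOn_vF.mul differentiableOn_id).pow n).fun_div (by fun_prop)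
    fun z hz => one_sub_two_mul_add_pow_ne_zero (mem_ball_zero_iff.1 hz) _

lemma differentiableOn_tsum_PAsingleTerm :
    DifferentiableOn ℂ (fun q => ∑' n, PAsingleTerm q n) (Metric.ball 0 (1 / 2)) := by
  obtain ⟨C, hC⟩ := exists_norm_PAsingleTerm_le
  have hC₀ : 0 ≤ C := by
    simpa using (norm_nonneg _).trans (hC 0 (by simp) 0)
  refine fun z hz => DifferentiableAt.differentiableWithinAt ?_
  obtain ⟨ρ, hzρ, hρ⟩ := exists_between (mem_ball_zero_iff.1 hz)
  have hsub : Metric.ball (0 : ℂ) ρ ⊆ Metric.ball 0 (1 / 2) := Metric.ball_subset_ball hρ.le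
  refine (differentiableOn_tsum_of_summable_norm
    (summable_three_quarters_pow_div C ((1 - 2 * ρ) / 2))
    (fun n => (differentiableOn_PAsingleTerm n).mono hsub) Metric.isOpen_ball
    fun n w hw => ?_).differentiableAt (Metric.isOpen_ball.mem_nhds (mem_ball_zero_iff.2 hzρ))
  have hwρ := mem_ball_zero_iff.1 hw
  refine (hC w (hwρ.trans hρ) n).trans ?_
  gcongr
  linarith

lemma analyticOnNhd_PAcont : AnalyticOnNhd ℂ PAcont (Metric.ball 0 (1 / 2)) := by
  have hlt_one : ∀ z ∈ Metric.ball (0 : ℂ) (1 / 2), ‖id z‖ < 1 := fun z hz => by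
    have := mem_ball_zero_iff.1 hz
    rw [id]
    linarith
  have hquot := (differentiableOn_qPI Metric.isOpen_ball differentiableOn_vF differentiableOn_id
    hlt_one).fun_div (differentiableOn_qPI Metric.isOpen_ball
      (differentiableOn_aF.mul differentiableOn_vF) differentiableOn_id hlt_one)
    fun z hz => qPI_aF_mul_vF_ne_zero (mem_ball_zero_iff.1 hz)
  exact DifferentiableOn.analyticOnNhd (differentiableOn_CF.sub
    ((((differentiableOn_id.pow 2).mul differentiableOn_AF).mul hquot).mul
      differentiableOn_tsum_PAsingleTerm)) Metric.isOpen_ball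

end Continuation

section GeneratingFunction

variable {q : ℂ}

lemma PAterm_prod_eq (hq : ‖q‖ < 1 / 2) (m : ℕ) :
    ∏ k ∈ Finset.Icc 1 m, ((1 - q - q ^ k + q ^ (k + 1) - q ^ (k + 2)) / (1 - q - q ^ (k + 1))) =
      ∏ i ∈ Finset.range m, (1 - vF q * q ^ (i + 1)) / (1 - aF q * vF q * q ^ i) := by
  have hq₁ := one_sub_ne_zero_of_norm_lt_half hq
  have factor_eq : ∀ i : ℕ, (1 - q - q ^ (i + 1) + q ^ (i + 1 + 1) - q ^ (i + 1 + 2)) /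
      (1 - q - q ^ (i + 1 + 1)) = (1 - vF q * q ^ (i + 1)) / (1 - aF q * vF q * q ^ i) :=
    fun i => by
      rw [← mul_div_mul_left (1 - vF q * q ^ (i + 1)) _ hq₁, aF_mul_vF hq, vF]
      congr 1 <;> field_simp <;> ring
  rw [Finset.range_eq_Ico, Finset.prod_congr rfl fun i _ => (factor_eq i).symm,
    Finset.prod_Ico_add' (fun k => (1 - q - q ^ k + q ^ (k + 1) - q ^ (k + 2)) /
      (1 - q - q ^ (k + 1)))]
  rfl

lemma sq_mul_PAterm_succ (hq : ‖q‖ < 1 / 2) (m : ℕ) :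
    q ^ 2 * PAterm q (m + 1) = -((-(q ^ 2 / (1 - 2 * q))) ^ (m + 1) *
      (qPF (vF q) q (m + 1) / qPF (aF q * vF q) q (m + 1))) := by
  have hq₁ := one_sub_ne_zero_of_norm_lt_half hq
  have hlast : q ^ 2 / (1 - q - q ^ (m + 1 + 1)) =
      -((1 - vF q * q ^ 0) / (1 - aF q * vF q * q ^ m)) := by
    rw [← mul_div_mul_left (1 - vF q * q ^ 0) _ hq₁, ← neg_div, aF_mul_vF hq, vF]
    congr 1 <;> field_simp <;> ring
  have hratio : q ^ 2 / (1 - q - q ^ (m + 1 + 1)) * ∏ i ∈ Finset.range m,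
      (1 - vF q * q ^ (i + 1)) / (1 - aF q * vF q * q ^ i) =
        -(qPF (vF q) q (m + 1) / qPF (aF q * vF q) q (m + 1)) := by
    rw [hlast, qPF_succ (aF q * vF q), qPF, Finset.prod_range_succ', mul_div_mul_comm,
      Finset.prod_div_distrib, qPF]
    ring
  rw [PAterm, Nat.add_sub_cancel, PAterm_prod_eq hq, ← mul_neg, ← hratio, div_mul_eq_div_div,
    neg_pow (q ^ 2 / (1 - 2 * q)), div_pow, ← pow_mul]
  ring

lemma tsum_PAterm_eq (hq : ‖q‖ < 1 / 2) (hq' : ‖q ^ 2‖ < ‖1 - 2 * q‖) :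
    ∑' m, q ^ 2 * PAterm q (m + 1) =
      q ^ 2 * (qPI (vF q) q / qPI (aF q * vF q) q) * ∑' n, PAsingleTerm q n := by
  have hq₁ : ‖q‖ < 1 := by linarith
  have hw : ‖vF q * q‖ < 1 := by linarith [norm_vF_mul_le hq]
  have h₂ := one_sub_two_mul_ne_zero hq
  set x := -(q ^ 2 / (1 - 2 * q)) with hx_def
  have hx : ‖x‖ < 1 := by rwa [norm_neg, norm_div, div_lt_one (norm_pos_iff.2 h₂)]
  set K := qPI (vF q) q / qPI (aF q * vF q) q
  have term_eq : ∀ m, q ^ 2 * PAterm q (m + 1) =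
      -(x * K) * (x ^ m * ∑' n, qBinomCoeff (aF q) q n * (vF q * q * q ^ m) ^ n) := fun m => by
    have hvq : vF q * q ^ (m + 1) = vF q * q * q ^ m := by ring
    rw [sq_mul_PAterm_succ hq, qPF_div_qPF_eq hq₁ (hvq ▸ (norm_mul_pow_le _ hq₁.le m).trans_lt hw)
      (qPI_aF_mul_vF_ne_zero hq), hvq, qBinomSeries]
    ring
  obtain ⟨C, hC⟩ := exists_norm_qBinomCoeff_le (aF q) hq₁
  rw [tsum_congr term_eq, tsum_mul_left, tsum_pow_mul_tsum_mul_pow hC hx hq₁.le hw,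
    ← tsum_mul_left, ← tsum_mul_left]
  refine tsum_congr fun n => ?_
  have hden : 1 - 2 * q + q ^ (n + 2) = (1 - 2 * q) * (1 - x * q ^ n) := by
    rw [hx_def]
    field_simp
    ring
  rw [PAsingleTerm, hden, hx_def]
  field_simp

lemma PAseries_eq_PAcont (hq : ‖q‖ < 1 / 2) (hq' : ‖q ^ 2‖ < ‖1 - 2 * q‖) :
    PAseries q = PAcont q := by
  have hsum := tsum_PAterm_eq hq hq'
  rw [tsum_mul_left] at hsum
  rw [PAseries, PAcont, CF, AF]
  linear_combination (-(2 * q * (1 - q) ^ 2 / (1 - 2 * q) ^ 2)) * hsum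

end GeneratingFunction

section DoubleSeries

variable {q : ℂ}

lemma Tterm_eq (hq₀ : q ≠ 0) (hq : ‖q‖ < 1 / 2) (ν j : ℕ) :
    Tterm q ν j = (vF q * q) ^ ν / (1 - 2 * q + q ^ (ν + 2)) *
      (qBinomCoeff (q / aF q) q j * (aF q * q ^ ν) ^ j) := by
  rw [Tterm, qPF_zpow_neg_div (aF_ne_zero hq₀ hq) hq₀]
  ring

lemma norm_aF_mul_pow_succ_le (hq : ‖q‖ < 1 / 2) (n : ℕ) : ‖aF q * q ^ (n + 1)‖ ≤ 1 / 2 := by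
  have hpow : ‖q ^ (n + 1)‖ ≤ ‖q‖ := by
    simpa only [pow_succ'] using norm_mul_pow_le q (by linarith) n
  rw [norm_mul]
  calc ‖aF q‖ * ‖q ^ (n + 1)‖ ≤ 1 * (1 / 2) := by
        gcongr
        exacts [norm_aF_le_one hq, hpow.trans hq.le]
    _ = 1 / 2 := one_mul _

lemma summable_norm_Tterm (hq₀ : q ≠ 0) (hq : ‖q‖ < 1 / 2) :
    Summable fun p : ℕ × ℕ => ‖Tterm q (p.1 + 1) p.2‖ := by
  obtain ⟨C, hC⟩ := exists_norm_qBinomCoeff_le (q / aF q) (hq.trans one_half_lt_one)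
  have hC₀ : 0 ≤ C := (norm_nonneg _).trans (hC 0)
  have hd : 0 < (1 - 2 * ‖q‖) / 2 := by linarith
  have majorant := ((summable_nat_add_iff 1).2
    (summable_three_quarters_pow_div 1 ((1 - 2 * ‖q‖) / 2))).mul_of_nonneg
      (summable_geometric_two.mul_left C) (fun _ => by positivity) fun _ => by positivity
  refine .of_nonneg_of_le (fun _ => norm_nonneg _) (fun ⟨n, j⟩ => ?_) majorant
  rw [Tterm_eq hq₀ hq, norm_mul, norm_div, norm_mul, norm_pow, norm_pow, one_mul]
  gcongr
  exacts [norm_vF_mul_le hq, norm_one_sub_two_mul_add_pow_ge hq.le _, hC j,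
    norm_aF_mul_pow_succ_le hq n]

lemma tsum_Tterm_eq (hq₀ : q ≠ 0) (hq : ‖q‖ < 1 / 2) :
    qPI (aF q) q / qPI q q * ∑' p : ℕ × ℕ, Tterm q (p.1 + 1) p.2 =
      ∑' n, PAsingleTerm q (n + 1) := by
  have hq₁ : ‖q‖ < 1 := by linarith
  have ha_mul : q / aF q * aF q = q := div_mul_cancel₀ _ (aF_ne_zero hq₀ hq)
  rw [(summable_norm_Tterm hq₀ hq).of_norm.tsum_prod, ← tsum_mul_left]
  refine tsum_congr fun n => ?_
  have hcoeff := qPF_div_qPF_eq (a := q / aF q) hq₁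
    ((norm_aF_mul_pow_succ_le hq n).trans_lt one_half_lt_one)
    (by rw [ha_mul]; exact qPI_ne_zero hq₁ hq₁)
  rw [ha_mul, qBinomSeries] at hcoeff
  rw [tsum_congr (Tterm_eq hq₀ hq (n + 1)), tsum_mul_left, PAsingleTerm, qBinomCoeff, hcoeff]
  ring

lemma PAsingleTerm_zero (q : ℂ) : PAsingleTerm q 0 = 1 / (1 - q) ^ 2 := by
  rw [PAsingleTerm, qBinomCoeff_zero]
  ring

lemma PAcont_eq_double_series (hq₀ : q ≠ 0) (hq : ‖q‖ < 1 / 2) :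
    PAcont q = DF q - q ^ 2 * AF q *
      (qPI (aF q) q * qPI (vF q) q / (qPI q q * qPI (aF q * vF q) q)) *
        ∑' p : ℕ × ℕ, Tterm q (p.1 + 1) p.2 := by
  rw [PAcont, (summable_PAsingleTerm hq).tsum_eq_zero_add, PAsingleTerm_zero,
    ← tsum_Tterm_eq hq₀ hq, DF, mul_div_mul_comm (qPI (aF q) q)]
  ring

end DoubleSeries

theorem PA_double_sum_representation_general :
    ∃ f : ℂ → ℂ,
      AnalyticOnNhd ℂ f (Metric.ball 0 (1 / 2)) ∧
      (∀ z : ℂ, ‖z‖ < 1 / 2 → ‖z ^ 2‖ < ‖1 - 2 * z‖ → f z = PAseries z) ∧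
      ∀ q : ℂ, q ≠ 0 → ‖q‖ < 1 / 2 →
        Summable (fun p : ℕ × ℕ => ‖Tterm q (p.1 + 1) p.2‖) ∧
        f q =
          DF q - q ^ 2 * AF q *
            (qPI (aF q) q * qPI (vF q) q / (qPI q q * qPI (aF q * vF q) q)) *
            ∑' p : ℕ × ℕ, Tterm q (p.1 + 1) p.2 :=
  ⟨PAcont, analyticOnNhd_PAcont,
    fun _ hz hz' => (PAseries_eq_PAcont hz hz').symm,
    fun _ hq₀ hq => ⟨summable_norm_Tterm hq₀ hq, PAcont_eq_double_series hq₀ hq⟩⟩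

lemma real_segment_subset_ball (r : ℝ) :
    {z : ℂ | z.im = 0 ∧ 0 < z.re ∧ z.re < r} ⊆ Metric.ball 0 r :=
  fun z ⟨him, hpos, hlt⟩ => by
    rw [mem_ball_zero_iff, ← abs_re_eq_norm.2 him, abs_of_pos hpos]
    exact hlt

lemma norm_sq_lt_norm_one_sub_two_mul {z : ℂ} (hz : ‖z‖ < 1 / 3) : ‖z ^ 2‖ < ‖1 - 2 * z‖ := by
  have h := norm_sub_norm_le 1 (2 * z)
  rw [norm_one, norm_mul, norm_ofNat] at h
  rw [norm_pow]
  nlinarith [norm_nonneg z]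

/-- For real `q ∈ (0, 1/2)`, the double series `T(q)` converges absolutely and the
analytic continuation of `PA` satisfies
`PA(q) = D(q) - q² A(q) ((a;q)_∞ (v;q)_∞/((q;q)_∞ (av;q)_∞)) T(q)`. -/
theorem PA_double_sum_representation :
    ∃ f : ℂ → ℂ,
      AnalyticOnNhd ℂ f {z : ℂ | z.im = 0 ∧ 0 < z.re ∧ z.re < 1 / 2} ∧
      (∀ z : ℂ, ‖z‖ < 1 / 10 → f z = PAseries z) ∧
      ∀ q : ℝ, 0 < q → q < 1 / 2 →
        Summable (fun p : ℕ × ℕ => ‖Tterm (q : ℂ) (p.1 + 1) p.2‖) ∧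
        f (q : ℂ) =
          DF (q : ℂ) - (q : ℂ) ^ 2 * AF (q : ℂ) *
            (qPI (aF q) q * qPI (vF q) q / (qPI (q : ℂ) q * qPI (aF q * vF q) q)) *
            ∑' p : ℕ × ℕ, Tterm (q : ℂ) (p.1 + 1) p.2 := by
  obtain ⟨f, hf, hseries, hsum⟩ := PA_double_sum_representation_general
  exact ⟨f, hf.mono (real_segment_subset_ball _), fun z hz => hseries z (by linarith)
    (norm_sq_lt_norm_one_sub_two_mul (by linarith)),
    fun q hq₀ hq => hsum q (mod_cast hq₀.ne') (by rwa [norm_real, Real.norm_of_nonneg hq₀.le])⟩
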